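/- Let U and V be minimal representations such that for every valuation σ the maximum of ⟦u⟧σ over u ∈ U equals the maximum of ⟦v⟧σ over v ∈ V. Then for every finite set E and S ∈ ℕ, the sublevel B(E, S) belongs to U if and only if it belongs to V. -/

import Mathlib

/-- The impredicative maximum on natural numbers. -/
def imaxN : ℕ → ℕ → ℕ
  | _, 0 => 0
  | i, (j+1) => max i (j+1)

/-- Sublevels A(E,x,S) and B(E,S). -/
inductive SubLvl where
  | A : Finset ℕ → ℕ → ℕ → SubLvl
  | B : Finset ℕ → ℕ → SubLvl
deriving DecidableEq

/-- Value of a sublevel under a valuation. -/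
def evalS (σ : ℕ → ℕ) : SubLvl → ℕ
  | .A E x S => if ∃ y ∈ E, σ y = 0 then 0 else σ x + S
  | .B E S => if ∃ y ∈ E, σ y = 0 then 0 else S

/-- Wellformed sublevels. -/
def Wf : SubLvl → Prop
  | .A E x _ => x ∈ E
  | .B _ S => 0 < S

/-- Semantic comparison of sublevels. -/
def leT (u v : SubLvl) : Prop := ∀ σ : ℕ → ℕ, evalS σ u ≤ evalS σ v

/-- A minimal representation: a finite set of wellformed, pairwise
incomparable sublevels. -/
def MinRep (U : Finset SubLvl) : Prop :=
  (∀ u ∈ U, Wf u) ∧ ∀ u ∈ U, ∀ v ∈ U, u ≠ v → ¬ leT u v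

/-!
On valuations that vanish nowhere, a sublevel is just `σ x + S` or `S`, and restricting a valuation
to a finite set `E` kills exactly the sublevels whose condition set is not contained in `E`. Hence
`u ≤_T v` holds iff the condition set of `v` is contained in that of `u` and `u` is below `v` on
nowhere vanishing valuations.

For each wellformed `u`, a single nowhere vanishing valuation, restricted to the condition set of
`u`, detects which members `v` of a finite set satisfy `u ≤_T v`: the constant `1` if `u` is a
`B`, and a valuation that is huge at `x` and `1` elsewhere if `u = A(E,x,S)`. So a wellformed
sublevel lying below a maximum lies below one of its members. As `≤_T` is antisymmetric on
wellformed sublevels, two minimal representations with equal values coincide.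
-/

namespace SubLvl

/-- The condition set `E` of `A(E,x,S)` or `B(E,S)`: the variables whose vanishing makes the
sublevel vanish. -/
def vars : SubLvl → Finset ℕ
  | A E _ _ => E
  | B E _ => E

/-- The additive constant `S` of `A(E,x,S)` or `B(E,S)`; a bound on the constants of a finite set
of sublevels says how large a valuation must be to tell its members apart. -/
def const : SubLvl → ℕ
  | A _ _ S => S
  | B _ S => S

variable {σ τ : ℕ → ℕ} {u v : SubLvl}

theorem evalS_A_of_pos (hσ : ∀ y, 0 < σ y) (E : Finset ℕ) (x S : ℕ) :
    evalS σ (A E x S) = σ x + S :=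
  if_neg fun ⟨y, _, hy⟩ => (hσ y).ne' hy

theorem evalS_B_of_pos (hσ : ∀ y, 0 < σ y) (E : Finset ℕ) (S : ℕ) : evalS σ (B E S) = S :=
  if_neg fun ⟨y, _, hy⟩ => (hσ y).ne' hy

theorem evalS_pos (hu : Wf u) (hσ : ∀ y, 0 < σ y) : 0 < evalS σ u := by
  cases u with
  | A E x S => exact (Nat.add_pos_left (hσ x) S).trans_eq (evalS_A_of_pos hσ E x S).symm
  | B E S => exact hu.trans_eq (evalS_B_of_pos hσ E S).symm

theorem evalS_eq_zero_of_exists (h : ∃ y ∈ u.vars, σ y = 0) : evalS σ u = 0 := by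
  cases u <;> exact if_pos h

theorem evalS_congr (hu : Wf u) (h : ∀ y ∈ u.vars, σ y = τ y) : evalS σ u = evalS τ u := by
  have vanish_iff : (∃ y ∈ u.vars, σ y = 0) ↔ ∃ y ∈ u.vars, τ y = 0 :=
    exists_congr fun y => and_congr_right fun hy => by rw [h y hy]
  cases u with
  | A E x S => exact if_congr vanish_iff rfl (congrArg (· + S) (h x hu))
  | B E S => exact if_congr vanish_iff rfl rfl

theorem evalS_indicator (hu : Wf u) (σ : ℕ → ℕ) (E : Finset ℕ) :
    evalS ((E : Set ℕ).indicator σ) u = if u.vars ⊆ E then evalS σ u else 0 := by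
  split_ifs with hE
  · exact evalS_congr hu fun y hy => Set.indicator_of_mem (Finset.mem_coe.2 (hE hy)) σ
  · obtain ⟨y, hyu, hyE⟩ := Finset.not_subset.1 hE
    exact evalS_eq_zero_of_exists ⟨y, hyu, Set.indicator_of_notMem (mt Finset.mem_coe.1 hyE) σ⟩

theorem vars_subset_and_evalS_le_of_indicator (hu : Wf u) (hv : Wf v) (hσ : ∀ y, 0 < σ y)
    (h : evalS ((u.vars : Set ℕ).indicator σ) u ≤ evalS ((u.vars : Set ℕ).indicator σ) v) :
    v.vars ⊆ u.vars ∧ evalS σ u ≤ evalS σ v := by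
  rw [evalS_indicator hu, evalS_indicator hv, if_pos subset_rfl] at h
  split_ifs at h with hvu
  · exact ⟨hvu, h⟩
  · exact absurd (evalS_pos hu hσ) h.not_gt

theorem leT_iff (hu : Wf u) (hv : Wf v) :
    leT u v ↔ v.vars ⊆ u.vars ∧ ∀ σ : ℕ → ℕ, (∀ y, 0 < σ y) → evalS σ u ≤ evalS σ v := by
  refine ⟨fun h => ⟨?_, fun σ _ => h σ⟩, fun ⟨hvu, h⟩ σ => ?_⟩
  · exact (vars_subset_and_evalS_le_of_indicator hu hv (fun _ => one_pos) (h _)).1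
  · by_cases hσ : ∃ y ∈ u.vars, σ y = 0
    · exact (evalS_eq_zero_of_exists hσ).trans_le (Nat.zero_le _)
    · push Not at hσ
      have hmax : ∀ y ∈ u.vars, σ y = max (σ y) 1 := fun y hy =>
        (max_eq_left (Nat.one_le_iff_ne_zero.2 (hσ y hy))).symm
      calc
        evalS σ u = evalS (fun y => max (σ y) 1) u := evalS_congr hu hmax
        _ ≤ evalS (fun y => max (σ y) 1) v := h _ fun _ => by positivity
        _ = evalS σ v := (evalS_congr hv fun y hy => hmax y (hvu hy)).symm

theorem one_valuation_pos (y : ℕ) : 0 < (1 : ℕ → ℕ) y := one_pos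

theorem update_one_pos {n : ℕ} (hn : 0 < n) (x y : ℕ) :
    0 < Function.update (1 : ℕ → ℕ) x n y := by
  rw [Function.update_apply]
  split_ifs
  exacts [hn, one_pos]

theorem eq_and_eq_of_evalS_A_eq {E F : Finset ℕ} {x z S T : ℕ}
    (h : ∀ σ : ℕ → ℕ, evalS σ (A E x S) = evalS σ (A F z T)) : x = z ∧ S = T := by
  have hST : S = T := by
    simpa only [evalS_A_of_pos one_valuation_pos, Pi.one_apply, Nat.add_left_cancel_iff] using h 1
  refine ⟨by_contra fun hxz => ?_, hST⟩
  have htwo := h (Function.update 1 x 2)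
  rw [evalS_A_of_pos (update_one_pos two_pos x), evalS_A_of_pos (update_one_pos two_pos x),
    Function.update_self, Function.update_of_ne (Ne.symm hxz), Pi.one_apply] at htwo
  omega

theorem not_forall_evalS_A_eq_evalS_B (E F : Finset ℕ) (x S T : ℕ) :
    ¬ ∀ σ : ℕ → ℕ, evalS σ (A E x S) = evalS σ (B F T) := by
  intro h
  have hlarge := h fun _ => T + 1
  rw [evalS_A_of_pos fun _ => T.succ_pos, evalS_B_of_pos fun _ => T.succ_pos] at hlarge
  omega

theorem leT_antisymm (hu : Wf u) (hv : Wf v) (huv : leT u v) (hvu : leT v u) : u = v := by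
  have hvars : u.vars = v.vars := ((leT_iff hv hu).1 hvu).1.antisymm ((leT_iff hu hv).1 huv).1
  have heval (σ : ℕ → ℕ) : evalS σ u = evalS σ v := (huv σ).antisymm (hvu σ)
  cases u with
  | A E x S => cases v with
    | A F z T =>
      obtain ⟨rfl, rfl⟩ := eq_and_eq_of_evalS_A_eq heval
      exact congrArg (A · x S) hvars
    | B F T => exact absurd heval (not_forall_evalS_A_eq_evalS_B E F x S T)
  | B E S => cases v with
    | A F z T =>
      exact absurd (fun σ => (heval σ).symm) (not_forall_evalS_A_eq_evalS_B F E z T S)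
    | B F T =>
      have hST : S = T := by
        simpa only [evalS_B_of_pos one_valuation_pos] using heval 1
      exact congrArg₂ B hvars hST

theorem evalS_B_le_of_evalS_one_le {E : Finset ℕ} {S : ℕ} (h : evalS 1 (B E S) ≤ evalS 1 v)
    (hσ : ∀ y, 0 < σ y) : evalS σ (B E S) ≤ evalS σ v := by
  rw [evalS_B_of_pos one_valuation_pos] at h
  rw [evalS_B_of_pos hσ]
  cases v with
  | A F z T =>
    rw [evalS_A_of_pos one_valuation_pos, Pi.one_apply] at h
    rw [evalS_A_of_pos hσ]
    exact h.trans (Nat.add_le_add_right (hσ z) T)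
  | B F T =>
    rw [evalS_B_of_pos one_valuation_pos] at h
    rwa [evalS_B_of_pos hσ]

theorem evalS_A_le_of_evalS_update_le {E : Finset ℕ} {x S N : ℕ} (hN : v.const ≤ N)
    (h : evalS (Function.update 1 x (N + 2)) (A E x S) ≤ evalS (Function.update 1 x (N + 2)) v)
    (hσ : ∀ y, 0 < σ y) : evalS σ (A E x S) ≤ evalS σ v := by
  have hτ := update_one_pos (N + 1).succ_pos x
  rw [evalS_A_of_pos hτ, Function.update_self] at h
  cases v with
  | A F z T =>
    rw [evalS_A_of_pos hτ] at h
    have hzx : z = x := by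
      by_contra hne
      rw [Function.update_of_ne hne, Pi.one_apply] at h
      simp only [const] at hN
      omega
    subst hzx
    rw [Function.update_self] at h
    rw [evalS_A_of_pos hσ, evalS_A_of_pos hσ]
    omega
  | B F T =>
    rw [evalS_B_of_pos hτ] at h
    simp only [const] at hN
    omega

theorem exists_valuation_detecting_le (u : SubLvl) (N : ℕ) :
    ∃ τ : ℕ → ℕ, (∀ y, 0 < τ y) ∧ ∀ v : SubLvl, v.const ≤ N → evalS τ u ≤ evalS τ v →
      ∀ σ : ℕ → ℕ, (∀ y, 0 < σ y) → evalS σ u ≤ evalS σ v := by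
  cases u with
  | A E x S =>
    exact ⟨Function.update 1 x (N + 2), update_one_pos (N + 1).succ_pos x,
      fun v hvN hle σ hσ => evalS_A_le_of_evalS_update_le hvN hle hσ⟩
  | B E S =>
    exact ⟨1, one_valuation_pos, fun v _ hle σ hσ => evalS_B_le_of_evalS_one_le hle hσ⟩

theorem exists_leT_of_forall_le_sup {U : Finset SubLvl} (hu : Wf u) (hU : ∀ v ∈ U, Wf v)
    (h : ∀ σ : ℕ → ℕ, evalS σ u ≤ U.sup (evalS σ)) : ∃ v ∈ U, leT u v := by
  obtain ⟨τ, hτ, hτ_detects⟩ := exists_valuation_detecting_le u (U.sup const)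
  have hpos : 0 < evalS ((u.vars : Set ℕ).indicator τ) u := by
    rw [evalS_indicator hu, if_pos subset_rfl]
    exact evalS_pos hu hτ
  obtain ⟨v, hvU, hle⟩ := (Finset.le_sup_iff hpos).1 (h ((u.vars : Set ℕ).indicator τ))
  obtain ⟨hvars, hτ_le⟩ := vars_subset_and_evalS_le_of_indicator hu (hU v hvU) hτ hle
  exact ⟨v, hvU, (leT_iff hu (hU v hvU)).2 ⟨hvars, hτ_detects v (Finset.le_sup hvU) hτ_le⟩⟩

end SubLvl

theorem MinRep.subset_of_sup_eq {U V : Finset SubLvl} (hU : MinRep U) (hV : ∀ v ∈ V, Wf v)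
    (h : ∀ σ : ℕ → ℕ, U.sup (evalS σ) = V.sup (evalS σ)) : U ⊆ V := by
  intro u hu
  obtain ⟨v, hv, huv⟩ := SubLvl.exists_leT_of_forall_le_sup (hU.1 u hu) hV fun σ =>
    h σ ▸ Finset.le_sup (f := evalS σ) hu
  obtain ⟨w, hw, hvw⟩ := SubLvl.exists_leT_of_forall_le_sup (hV v hv) hU.1 fun σ =>
    h σ ▸ Finset.le_sup (f := evalS σ) hv
  have huw : u = w :=
    by_contra fun hne => hU.2 u hu w hw hne fun σ => (huv σ).trans (hvw σ)
  have huv_eq : u = v := SubLvl.leT_antisymm (hU.1 u hu) (hV v hv) huv (huw ▸ hvw)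
  exact huv_eq ▸ hv

theorem minrep_same_B_general {U V : Finset SubLvl} (hU : MinRep U) (hV : MinRep V)
    (h : ∀ σ : ℕ → ℕ, U.sup (evalS σ) = V.sup (evalS σ)) : U = V :=
  (hU.subset_of_sup_eq hV.1 h).antisymm (hV.subset_of_sup_eq hU.1 fun σ => (h σ).symm)

theorem minrep_same_B (U V : Finset SubLvl) (hU : MinRep U) (hV : MinRep V)
    (h : ∀ σ : ℕ → ℕ, U.sup (evalS σ) = V.sup (evalS σ)) :
    ∀ (E : Finset ℕ) (S : ℕ), SubLvl.B E S ∈ U ↔ SubLvl.B E S ∈ V := by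
  intro E S
  rw [minrep_same_B_general hU hV h]
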